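/- arXiv:2605.09828 — 2 statements merged into one kernel-verified Lean document; each statement's English description precedes it below -/
import Mathlib

section
/- For every λ ∈ K and every i ∈ {1, …, n}, the subspaces 𝔨 and 𝔩 of V^n are invariant under the endomorphism c_λ(A)_i; consequently each c_λ(A)_i induces a well-defined endomorphism of the quotient space V^n/(𝔨 + 𝔩). -/
/-! Dettweiler–Reiter convolution and middle convolution, in linear-algebra form.
`V^n` is modelled as `Fin n → V`. -/

/-- The Dettweiler–Reiter convolution endomorphism `c_λ(A)_i` of `V^n`, defined by
`(c_λ(A)_i w)_i = A_1 w_1 + ⋯ + A_n w_n + λ w_i` and `(c_λ(A)_i w)_k = 0` for `k ≠ i`. -/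
noncomputable def cDR {K : Type*} [Field K] {V : Type*} [AddCommGroup V] [Module K V]
    {n : ℕ} (lam : K) (A : Fin n → Module.End K V) (i : Fin n) :
    Module.End K (Fin n → V) :=
  (LinearMap.single K (fun _ : Fin n => V) i).comp
    ((∑ j, (A j).comp (LinearMap.proj j)) + lam • LinearMap.proj i)

/-- The subspace `𝔨 = {w ∈ V^n : A_i w_i = 0 for all i}`. -/
def kSub {K : Type*} [Field K] {V : Type*} [AddCommGroup V] [Module K V]
    {n : ℕ} (A : Fin n → Module.End K V) : Submodule K (Fin n → V) :=
  ⨅ i, LinearMap.ker ((A i).comp (LinearMap.proj i))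

/-- The subspace `𝔩 = ⋂_{i=1}^n ker c_λ(A)_i`. -/
noncomputable def lSub {K : Type*} [Field K] {V : Type*} [AddCommGroup V] [Module K V]
    {n : ℕ} (lam : K) (A : Fin n → Module.End K V) : Submodule K (Fin n → V) :=
  ⨅ i, LinearMap.ker (cDR lam A i)

/-- The underlying space `V^n/(𝔨 + 𝔩)` of the middle convolution `mc_λ(V; A)`. -/
noncomputable abbrev mcSpace {K : Type*} [Field K] {V : Type*} [AddCommGroup V] [Module K V]
    {n : ℕ} (lam : K) (A : Fin n → Module.End K V) :=
  (Fin n → V) ⧸ (kSub A ⊔ lSub lam A)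

/-- `e` is the endomorphism `mc_λ(A)_i` of `V^n/(𝔨 + 𝔩)` induced by `c_λ(A)_i`,
characterised by `e ∘ mkQ = mkQ ∘ c_λ(A)_i`. -/
noncomputable def IsInducedEnd {K : Type*} [Field K] {V : Type*} [AddCommGroup V] [Module K V]
    {n : ℕ} (lam : K) (A : Fin n → Module.End K V) (i : Fin n)
    (e : Module.End K (mcSpace lam A)) : Prop :=
  e.comp (kSub A ⊔ lSub lam A).mkQ = (kSub A ⊔ lSub lam A).mkQ.comp (cDR lam A i)

theorem mem_invtSubmodule_of_le_ker {R M : Type*} [Semiring R] [AddCommMonoid M] [Module R M]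
    {f : Module.End R M} {p : Submodule R M} (hp : p ≤ LinearMap.ker f) :
    p ∈ f.invtSubmodule :=
  hp.trans (Submodule.comap_mono bot_le)

section Convolution

variable {K : Type*} [Field K] {V : Type*} [AddCommGroup V] [Module K V] {n : ℕ}
  (lam : K) (A : Fin n → Module.End K V) (i : Fin n)

theorem cDR_apply (w : Fin n → V) :
    cDR lam A i w = Pi.single i (∑ j, A j (w j) + lam • w i) := by
  simp [cDR]

variable {A} in
theorem mem_kSub {w : Fin n → V} : w ∈ kSub A ↔ ∀ j, A j (w j) = 0 := by
  simp [kSub]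

variable {A i} in
theorem single_mem_kSub {v : V} (hv : A i v = 0) : Pi.single i v ∈ kSub A :=
  mem_kSub.mpr fun j ↦ by
    obtain rfl | hj := eq_or_ne j i
    · rwa [Pi.single_eq_same]
    · rw [Pi.single_eq_of_ne hj, map_zero]

variable {A} in
theorem cDR_apply_of_mem_kSub {w : Fin n → V} (hw : w ∈ kSub A) :
    cDR lam A i w = lam • Pi.single i (w i) := by
  rw [cDR_apply, Finset.sum_eq_zero fun j _ ↦ mem_kSub.mp hw j, zero_add, Pi.single_smul]

theorem kSub_mem_invtSubmodule : kSub A ∈ (cDR lam A i).invtSubmodule := by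
  intro w hw
  rw [Submodule.mem_comap, cDR_apply_of_mem_kSub lam i hw]
  exact (kSub A).smul_mem lam (single_mem_kSub (mem_kSub.mp hw i))

theorem lSub_mem_invtSubmodule : lSub lam A ∈ (cDR lam A i).invtSubmodule :=
  mem_invtSubmodule_of_le_ker (iInf_le _ i)

theorem exists_isInducedEnd : ∃ e : Module.End K (mcSpace lam A), IsInducedEnd lam A i e :=
  have hsup : kSub A ⊔ lSub lam A ∈ (cDR lam A i).invtSubmodule :=
    Sublattice.sup_mem (kSub_mem_invtSubmodule lam A i) (lSub_mem_invtSubmodule lam A i)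
  ⟨Submodule.mapQ _ _ (cDR lam A i) hsup, Submodule.mapQ_mkQ _ _ _⟩

end Convolution

theorem kSub_lSub_invariant_and_induced_end_general
    {K : Type*} [Field K] {V : Type*} [AddCommGroup V] [Module K V]
    {n : ℕ} (A : Fin n → Module.End K V) (lam : K) (i : Fin n) :
    Submodule.map (cDR lam A i) (kSub A) ≤ kSub A ∧
    Submodule.map (cDR lam A i) (lSub lam A) ≤ lSub lam A ∧
    ∃ e : Module.End K (mcSpace lam A), IsInducedEnd lam A i e :=
  ⟨Submodule.map_le_iff_le_comap.mpr (kSub_mem_invtSubmodule lam A i),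
    Submodule.map_le_iff_le_comap.mpr (lSub_mem_invtSubmodule lam A i),
    exists_isInducedEnd lam A i⟩

/-- For every `λ ∈ K` and `i`, the subspaces `𝔨` and `𝔩` of `V^n` are
invariant under `c_λ(A)_i`; consequently `c_λ(A)_i` induces a well-defined endomorphism of
the quotient `V^n/(𝔨 + 𝔩)`. -/
theorem kSub_lSub_invariant_and_induced_end
    {K : Type*} [Field K] {V : Type*} [AddCommGroup V] [Module K V] [FiniteDimensional K V]
    {n : ℕ} (hn : 1 ≤ n) (A : Fin n → Module.End K V) (lam : K) (i : Fin n) :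
    Submodule.map (cDR lam A i) (kSub A) ≤ kSub A ∧
    Submodule.map (cDR lam A i) (lSub lam A) ≤ lSub lam A ∧
    ∃ e : Module.End K (mcSpace lam A), IsInducedEnd lam A i e :=
  kSub_lSub_invariant_and_induced_end_general A lam i
end

section
/- Let λ = 0 and let φ : V^n → V be the K-linear map φ(w) = A_1 w_1 + ⋯ + A_n w_n. Then φ ∘ c_0(A)_i = A_i ∘ φ for every i, and φ vanishes on 𝔨 + 𝔩; hence φ induces a K-linear map φ̄ : mc_0(V; A) → V satisfying φ̄ ∘ mc_0(A)_i = A_i ∘ φ̄ for every i. If (V; A) satisfies conditions (∗) and (∗∗), then φ̄ is a K-linear isomorphism. -/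
/-- Condition (∗): for every `i` and `τ ∈ K`,
`ker(A_i − τ·id_V) ∩ ⋂_{j ≠ i} ker A_j = {0}`. -/
def StarKer {K : Type*} [Field K] {V : Type*} [AddCommGroup V] [Module K V]
    {n : ℕ} (A : Fin n → Module.End K V) : Prop :=
  ∀ (i : Fin n) (τ : K),
    LinearMap.ker (A i - τ • (1 : Module.End K V)) ⊓
      (⨅ j, ⨅ _ : j ≠ i, LinearMap.ker (A j)) = ⊥

/-- Condition (∗∗): for every `i` and `τ ∈ K`,
`range(A_i − τ·id_V) + Σ_{j ≠ i} range A_j = V`. -/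
def StarIm {K : Type*} [Field K] {V : Type*} [AddCommGroup V] [Module K V]
    {n : ℕ} (A : Fin n → Module.End K V) : Prop :=
  ∀ (i : Fin n) (τ : K),
    LinearMap.range (A i - τ • (1 : Module.End K V)) ⊔
      (⨆ j, ⨆ _ : j ≠ i, LinearMap.range (A j)) = ⊤
/-! Let `ι_i : V → V^n` be the `i`-th inclusion. Then `c_0(A)_i = ι_i ∘ φ` and `φ ∘ ι_i = A_i`,
which gives `φ ∘ c_0(A)_i = A_i ∘ φ`. As `ι_i` is injective, `𝔩 = ker φ`, and this contains `𝔨`.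
So `mc_0(V; A)` is `V^n / ker φ`, and `φ̄` is the injection of the first isomorphism theorem, with
range `range φ = Σ_i range A_i`. Condition (∗∗) at `τ = 0` says that this sum is `V`. -/

section LSum

variable {R ι M : Type*} {N : ι → Type*} [Semiring R] [Fintype ι] [DecidableEq ι]
  [∀ i, AddCommMonoid (N i)] [∀ i, Module R (N i)] [AddCommMonoid M] [Module R M]
  (S : Type*) [Semiring S] [Module S M] [SMulCommClass R S M]

theorem lsum_comp_single (f : ∀ i, N i →ₗ[R] M) (i : ι) :
    LinearMap.lsum R N S f ∘ₗ LinearMap.single R N i = f i :=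
  congrFun ((LinearMap.lsum R N S).symm_apply_apply f) i

theorem range_lsum (f : ∀ i, N i →ₗ[R] M) :
    LinearMap.range (LinearMap.lsum R N S f) = ⨆ i, LinearMap.range (f i) := by
  simp only [LinearMap.range_eq_map (LinearMap.lsum R N S f), ← LinearMap.iSup_range_single,
    Submodule.map_iSup, ← LinearMap.range_comp, lsum_comp_single]

theorem iInf_ker_comp_proj_le_ker_lsum (f : ∀ i, N i →ₗ[R] M) :
    ⨅ i, LinearMap.ker (f i ∘ₗ LinearMap.proj i) ≤ LinearMap.ker (LinearMap.lsum R N S f) := by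
  intro w hw
  have hzero (i : ι) : (f i ∘ₗ LinearMap.proj i) w = 0 := (Submodule.mem_iInf _).1 hw i
  rw [LinearMap.mem_ker, LinearMap.lsum_apply, LinearMap.sum_apply]
  exact Finset.sum_eq_zero fun i _ => hzero i

end LSum

section MiddleConvolution

variable {K V : Type*} [Field K] [AddCommGroup V] [Module K V] {n : ℕ} (A : Fin n → Module.End K V)

/-- The map `φ : V^n → V`, `φ(w) = A_1 w_1 + ⋯ + A_n w_n`, as the map out of a finite product
with components `A_i`; by definition it is the sum `∑ j, A_j ∘ proj_j`. -/
noncomputable def comparisonMap : (Fin n → V) →ₗ[K] V :=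
  LinearMap.lsum K (fun _ => V) K A

theorem comparisonMap_comp_single (i : Fin n) :
    comparisonMap A ∘ₗ LinearMap.single K (fun _ => V) i = A i :=
  lsum_comp_single K A i

theorem range_comparisonMap :
    LinearMap.range (comparisonMap A) = ⨆ i, LinearMap.range (A i) :=
  range_lsum K A

theorem cDR_zero (i : Fin n) :
    cDR 0 A i = LinearMap.single K (fun _ => V) i ∘ₗ comparisonMap A := by
  rw [cDR, zero_smul, add_zero, comparisonMap, LinearMap.lsum_apply]

theorem comparisonMap_comp_cDR_zero (i : Fin n) :
    comparisonMap A ∘ₗ cDR 0 A i = A i ∘ₗ comparisonMap A := by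
  rw [cDR_zero, ← LinearMap.comp_assoc, comparisonMap_comp_single]

theorem kSub_le_ker_comparisonMap : kSub A ≤ LinearMap.ker (comparisonMap A) :=
  iInf_ker_comp_proj_le_ker_lsum K A

theorem ker_cDR_zero (i : Fin n) :
    LinearMap.ker (cDR 0 A i) = LinearMap.ker (comparisonMap A) := by
  rw [cDR_zero, LinearMap.ker_comp_of_ker_eq_bot]
  exact LinearMap.ker_single K (fun _ => V) i

theorem lSub_zero : lSub 0 A = LinearMap.ker (comparisonMap A) := by
  simp only [lSub, ker_cDR_zero]
  rcases isEmpty_or_nonempty (Fin n) with _ | _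
  · exact Subsingleton.elim _ _
  · exact iInf_const

theorem kSub_sup_lSub_zero : kSub A ⊔ lSub 0 A = LinearMap.ker (comparisonMap A) := by
  rw [lSub_zero, sup_eq_right]
  exact kSub_le_ker_comparisonMap A

/-- The map `φ̄ : mc_0(V; A) → V` induced by `φ`. -/
noncomputable def mcZeroMap : mcSpace 0 A →ₗ[K] V :=
  (kSub A ⊔ lSub 0 A).liftQ (comparisonMap A) (kSub_sup_lSub_zero A).le

theorem mcZeroMap_comp_mkQ : mcZeroMap A ∘ₗ (kSub A ⊔ lSub 0 A).mkQ = comparisonMap A :=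
  Submodule.liftQ_mkQ _ _ _

theorem mcZeroMap_injective : Function.Injective (mcZeroMap A) :=
  LinearMap.ker_eq_bot.1 <| Submodule.ker_liftQ_eq_bot' _ _ (kSub_sup_lSub_zero A)

theorem range_mcZeroMap : LinearMap.range (mcZeroMap A) = ⨆ i, LinearMap.range (A i) := by
  rw [mcZeroMap, Submodule.range_liftQ, range_comparisonMap]

variable {A}

theorem IsInducedEnd.mcZeroMap_comp {i : Fin n} {e : Module.End K (mcSpace 0 A)}
    (he : IsInducedEnd 0 A i e) : mcZeroMap A ∘ₗ e = A i ∘ₗ mcZeroMap A := by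
  apply Submodule.linearMap_qext
  calc (mcZeroMap A ∘ₗ e) ∘ₗ (kSub A ⊔ lSub 0 A).mkQ
      = mcZeroMap A ∘ₗ (kSub A ⊔ lSub 0 A).mkQ ∘ₗ cDR 0 A i := by
        rw [LinearMap.comp_assoc, he]
    _ = A i ∘ₗ comparisonMap A := by
        rw [← LinearMap.comp_assoc, mcZeroMap_comp_mkQ, comparisonMap_comp_cDR_zero]
    _ = (A i ∘ₗ mcZeroMap A) ∘ₗ (kSub A ⊔ lSub 0 A).mkQ := by
        rw [LinearMap.comp_assoc, mcZeroMap_comp_mkQ]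

theorem StarIm.iSup_range_eq_top (hA : StarIm A) (i : Fin n) :
    ⨆ j, LinearMap.range (A j) = ⊤ := by
  rw [iSup_split_single _ i]
  simpa only [zero_smul, sub_zero] using hA i 0

end MiddleConvolution

theorem mc_zero_comparison_map_general {K V : Type*} [Field K] [AddCommGroup V] [Module K V]
    {n : ℕ} (A : Fin n → Module.End K V) :
    (∀ i, (∑ j, (A j).comp (LinearMap.proj j)).comp (cDR 0 A i) =
        (A i).comp (∑ j, (A j).comp (LinearMap.proj j))) ∧
    (kSub A ⊔ lSub (0 : K) A ≤ LinearMap.ker (∑ j, (A j).comp (LinearMap.proj j))) ∧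
    ∃ φbar : mcSpace (0 : K) A →ₗ[K] V,
      φbar.comp (kSub A ⊔ lSub (0 : K) A).mkQ = (∑ j, (A j).comp (LinearMap.proj j)) ∧
      (∀ (i : Fin n) (e : Module.End K (mcSpace (0 : K) A)),
        IsInducedEnd 0 A i e → φbar.comp e = (A i).comp φbar) ∧
      Function.Injective φbar ∧ LinearMap.range φbar = ⨆ j, LinearMap.range (A j) :=
  ⟨comparisonMap_comp_cDR_zero A, (kSub_sup_lSub_zero A).le, mcZeroMap A, mcZeroMap_comp_mkQ A,
    fun _ _ he => he.mcZeroMap_comp, mcZeroMap_injective A, range_mcZeroMap A⟩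

/-- Let `λ = 0` and `φ : V^n → V`, `φ(w) = A_1 w_1 + ⋯ + A_n w_n`.
Then `φ ∘ c_0(A)_i = A_i ∘ φ` for every `i`, and `φ` vanishes on `𝔨 + 𝔩`; hence `φ`
induces a `K`-linear map `φ̄ : mc_0(V; A) → V` with `φ̄ ∘ mc_0(A)_i = A_i ∘ φ̄` for every
`i`.  If `(V; A)` satisfies (∗) and (∗∗), then `φ̄` is an isomorphism. -/
theorem mc_zero_comparison_map
    {K : Type*} [Field K] {V : Type*} [AddCommGroup V] [Module K V] [FiniteDimensional K V]
    {n : ℕ} (hn : 1 ≤ n) (A : Fin n → Module.End K V) :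
    (∀ i, (∑ j, (A j).comp (LinearMap.proj j)).comp (cDR 0 A i) =
        (A i).comp (∑ j, (A j).comp (LinearMap.proj j))) ∧
    (kSub A ⊔ lSub (0 : K) A ≤ LinearMap.ker (∑ j, (A j).comp (LinearMap.proj j))) ∧
    ∃ φbar : mcSpace (0 : K) A →ₗ[K] V,
      φbar.comp (kSub A ⊔ lSub (0 : K) A).mkQ = (∑ j, (A j).comp (LinearMap.proj j)) ∧
      (∀ (i : Fin n) (e : Module.End K (mcSpace (0 : K) A)),
        IsInducedEnd 0 A i e → φbar.comp e = (A i).comp φbar) ∧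
      (StarKer A → StarIm A → Function.Bijective φbar) := by
  obtain ⟨hcomm, hle, φbar, hφ, hind, hinj, hrange⟩ := mc_zero_comparison_map_general A
  exact ⟨hcomm, hle, φbar, hφ, hind, fun _ hIm =>
    ⟨hinj, LinearMap.range_eq_top.1 (hrange.trans (hIm.iSup_range_eq_top ⟨0, hn⟩))⟩⟩
end
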